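/- Let d ∈ ℕ, let U ∈ GL_d(ℤ) be a unipotent matrix, and let μ be an ergodic U-invariant Borel probability measure on the torus 𝕋^d = ℝ^d/ℤ^d (with U acting as the induced automorphism). Then there exist m ∈ ℕ, a point a ∈ 𝕋^d, and a closed connected proper subgroup H ≤ 𝕋^d such that the support of μ equals the union ⋃_{i=0}^{m−1} (Uⁱa + H), and for each i the restriction of μ to Uⁱa + H is a translate of the Haar measure on H normalized to total mass μ(Uⁱa + H). -/

import Mathlib

open MeasureTheory Topology Pointwise

/-- The `d`-dimensional torus `ℝ^d/ℤ^d`. -/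
abbrev Torus (d : ℕ) := Fin d → AddCircle (1 : ℝ)

/-- The automorphism of the torus induced by an integer matrix. -/
noncomputable def toralAuto {d : ℕ} (U : Matrix (Fin d) (Fin d) ℤ) : Torus d → Torus d :=
  fun x i => ∑ j, U i j • x j

/-- The support of a measure: the set of points all of whose open neighbourhoods have
positive measure. -/
def msupport {X : Type*} [TopologicalSpace X] [MeasurableSpace X] (μ : Measure X) : Set X :=
  {x : X | ∀ O : Set X, IsOpen O → x ∈ O → 0 < μ O}


namespace UniTorus

/-- The pairing of an integer vector with a point of the torus. -/
noncomputable def pr {d : ℕ} (χ : Fin d → ℤ) (x : Torus d) : AddCircle (1 : ℝ) :=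
  ∑ i, χ i • x i

section pairing
variable {d : ℕ}

lemma pr_add_left (χ ψ : Fin d → ℤ) (x : Torus d) : pr (χ + ψ) x = pr χ x + pr ψ x := by
  simp [pr, add_smul, Finset.sum_add_distrib]

lemma pr_sub_left (χ ψ : Fin d → ℤ) (x : Torus d) : pr (χ - ψ) x = pr χ x - pr ψ x := by
  simp [pr, sub_smul, Finset.sum_sub_distrib]

lemma pr_zero_left (x : Torus d) : pr 0 x = 0 := by
  simp [pr]

lemma pr_smul_left (n : ℤ) (χ : Fin d → ℤ) (x : Torus d) : pr (n • χ) x = n • pr χ x := by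
  simp [pr, Finset.smul_sum, mul_smul]

lemma pr_add_right (χ : Fin d → ℤ) (x y : Torus d) : pr χ (x + y) = pr χ x + pr χ y := by
  simp [pr, Finset.sum_add_distrib]

lemma pr_sub_right (χ : Fin d → ℤ) (x y : Torus d) : pr χ (x - y) = pr χ x - pr χ y := by
  simp [pr, Finset.sum_sub_distrib, smul_sub]

lemma pr_neg_right (χ : Fin d → ℤ) (x : Torus d) : pr χ (-x) = - pr χ x := by
  simp [pr]

lemma pr_zero_right (χ : Fin d → ℤ) : pr χ (0 : Torus d) = 0 := by
  simp [pr]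

lemma continuous_pr (χ : Fin d → ℤ) : Continuous (pr χ) := by
  unfold pr
  exact continuous_finsetSum _ fun i _ => (continuous_apply i).zsmul _

lemma pr_toral (U : Matrix (Fin d) (Fin d) ℤ) (χ : Fin d → ℤ) (x : Torus d) :
    pr χ (toralAuto U x) = pr (Matrix.vecMul χ U) x := by
  simp only [pr, toralAuto, Matrix.vecMul, dotProduct, Finset.smul_sum, Finset.sum_smul, mul_smul]
  exact Finset.sum_comm

lemma pr_iter (U : Matrix (Fin d) (Fin d) ℤ) (k : ℕ) (χ : Fin d → ℤ) (x : Torus d) :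
    pr χ ((toralAuto U)^[k] x) = pr (Matrix.vecMul χ (U ^ k)) x := by
  induction k generalizing χ with
  | zero => simp
  | succ k ih =>
    rw [Function.iterate_succ_apply', pr_toral, ih, Matrix.vecMul_vecMul, pow_succ']

lemma continuous_toral (U : Matrix (Fin d) (Fin d) ℤ) : Continuous (toralAuto U) := by
  unfold toralAuto
  exact continuous_pi fun i => continuous_finsetSum _ fun j _ => (continuous_apply j).zsmul _

/-- The multiplicative character attached to an integer vector. -/
noncomputable def ch (χ : Fin d → ℤ) (x : Torus d) : ℂ := (AddCircle.toCircle (pr χ x) : ℂ)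

lemma ch_add (χ ψ : Fin d → ℤ) (x : Torus d) : ch (χ + ψ) x = ch χ x * ch ψ x := by
  simp [ch, pr_add_left, AddCircle.toCircle_add]

lemma ch_smul (n : ℕ) (χ : Fin d → ℤ) (x : Torus d) : ch ((n : ℤ) • χ) x = ch χ x ^ n := by
  rw [ch, pr_smul_left, AddCircle.toCircle_zsmul]; simp [ch]

lemma norm_ch (χ : Fin d → ℤ) (x : Torus d) : ‖ch χ x‖ = 1 :=
  Circle.norm_coe _

lemma continuous_ch (χ : Fin d → ℤ) : Continuous (ch χ) :=
  continuous_induced_dom.comp (AddCircle.continuous_toCircle.comp (continuous_pr χ))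

lemma ch_eq_mFourier (χ : Fin d → ℤ) (x : Torus d) : UnitAddTorus.mFourier χ x = ch χ x := by
  simp only [UnitAddTorus.mFourier, ch, pr, ContinuousMap.coe_mk, fourier_apply]
  have : ∀ s : Finset (Fin d), (∏ i ∈ s, ((AddCircle.toCircle (χ i • x i)) : ℂ)) =
      (AddCircle.toCircle (∑ i ∈ s, χ i • x i) : ℂ) := by
    intro s
    induction s using Finset.induction_on with
    | empty => simp
    | insert a s ha ih => rw [Finset.prod_insert ha, Finset.sum_insert ha, ih,
        AddCircle.toCircle_add]; simp
  exact this _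

lemma conj_ch_mul (χ ψ : Fin d → ℤ) (x : Torus d) :
    (starRingEnd ℂ) (ch χ x) * ch ψ x = ch (ψ - χ) x := by
  rw [ch, ch, ch, pr_sub_left, sub_eq_add_neg, AddCircle.toCircle_add, AddCircle.toCircle_neg]
  rw [Circle.coe_mul, Circle.coe_inv_eq_conj, mul_comm]

lemma integrable_ch (χ : Fin d → ℤ) (μ : Measure (Torus d)) [IsFiniteMeasure μ] :
    Integrable (ch χ) μ :=
  Integrable.of_bound (continuous_ch χ).aestronglyMeasurable 1
    (Filter.Eventually.of_forall fun x => (norm_ch χ x).le)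

/-- Finite measures on the torus are determined by Fourier coefficients. -/
lemma ext_fourier (μ ν : Measure (Torus d)) [IsFiniteMeasure μ] [IsFiniteMeasure ν]
    (h : ∀ χ, ∫ x, ch χ x ∂μ = ∫ x, ch χ x ∂ν) : μ = ν := by
  have hfint : ∀ (ρ : Measure (Torus d)) [IsFiniteMeasure ρ] (f : C(Torus d, ℂ)),
      Integrable f ρ := fun ρ _ f =>
    Integrable.of_bound f.continuous.aestronglyMeasurable ‖f‖
      (Filter.Eventually.of_forall fun x => f.norm_coe_le_norm x)
  have hcont : ∀ (ρ : Measure (Torus d)) [IsFiniteMeasure ρ],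
      Continuous (fun f : C(Torus d, ℂ) => ∫ x, f x ∂ρ) := by
    intro ρ _
    have h1 : Continuous (fun f : C(Torus d, ℂ) =>
        ∫ x, (ContinuousMap.toLp (E := ℂ) 1 ρ ℂ f) x ∂ρ) :=
      continuous_integral.comp (ContinuousMap.toLp (E := ℂ) 1 ρ ℂ).continuous
    refine h1.congr fun f => integral_congr_ae (ContinuousMap.coeFn_toLp ρ f)
  let S : Submodule ℂ C(Torus d, ℂ) :=
    { carrier := {f | ∫ x, f x ∂μ = ∫ x, f x ∂ν}
      add_mem' := by
        intro f g hf hg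
        simp only [Set.mem_ofPred_eq, ContinuousMap.add_apply] at *
        rw [integral_add (hfint μ f) (hfint μ g), integral_add (hfint ν f) (hfint ν g), hf, hg]
      zero_mem' := by simp
      smul_mem' := by
        intro c f hf
        simp only [Set.mem_ofPred_eq, ContinuousMap.smul_apply] at *
        rw [integral_smul, integral_smul, hf] }
  have hS : IsClosed (S : Set C(Torus d, ℂ)) := isClosed_eq (hcont μ) (hcont ν)
  have hle : (Submodule.span ℂ (Set.range (UnitAddTorus.mFourier (d := Fin d)))).topologicalClosure
      ≤ S := by
    refine Submodule.topologicalClosure_minimal _ (Submodule.span_le.2 ?_) hS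
    rintro _ ⟨χ, rfl⟩
    change ∫ x, UnitAddTorus.mFourier χ x ∂μ = ∫ x, UnitAddTorus.mFourier χ x ∂ν
    simp only [ch_eq_mFourier]
    exact h χ
  rw [UnitAddTorus.span_mFourier_closure_eq_top] at hle
  refine ext_of_forall_integral_eq_of_IsFiniteMeasure fun f => ?_
  have := hle (x := ⟨fun x => (f x : ℂ), by fun_prop⟩) trivial
  change ∫ x, (f x : ℂ) ∂μ = ∫ x, (f x : ℂ) ∂ν at this
  rw [integral_complex_ofReal, integral_complex_ofReal] at this
  exact_mod_cast this

end pairing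

section gamma
variable {d : ℕ}

/-- Characters some nonzero multiple of which is a.e. constant. -/
noncomputable def Gam (μ : Measure (Torus d)) : Submodule ℤ (Fin d → ℤ) where
  carrier := {χ | ∃ n : ℤ, n ≠ 0 ∧ ∃ c : AddCircle (1 : ℝ), ∀ᵐ x ∂μ, n • pr χ x = c}
  zero_mem' := ⟨1, one_ne_zero, 0, by simp [pr_zero_left]⟩
  add_mem' := by
    rintro χ ψ ⟨n, hn, c, hc⟩ ⟨m, hm, e, he⟩
    refine ⟨n * m, mul_ne_zero hn hm, m • c + n • e, ?_⟩
    filter_upwards [hc, he] with x h1 h2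
    rw [← h1, ← h2, pr_add_left, smul_add, smul_smul, smul_smul, mul_comm m n]
  smul_mem' := by
    rintro k χ ⟨n, hn, c, hc⟩
    refine ⟨n, hn, k • c, ?_⟩
    filter_upwards [hc] with x h1
    rw [← h1, pr_smul_left, smul_comm]

lemma mem_Gam {μ : Measure (Torus d)} {χ : Fin d → ℤ} :
    χ ∈ Gam μ ↔ ∃ n : ℤ, n ≠ 0 ∧ ∃ c : AddCircle (1 : ℝ), ∀ᵐ x ∂μ, n • pr χ x = c := Iff.rfl

lemma Gam_pure {μ : Measure (Torus d)} {χ : Fin d → ℤ} {n : ℤ} (hn : n ≠ 0)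
    (h : n • χ ∈ Gam μ) : χ ∈ Gam μ := by
  obtain ⟨m, hm, c, hc⟩ := h
  refine ⟨m * n, mul_ne_zero hm hn, c, ?_⟩
  filter_upwards [hc] with x h1
  rw [← h1, pr_smul_left, smul_smul]

lemma Gam_stable {μ : Measure (Torus d)} {U : Matrix (Fin d) (Fin d) ℤ}
    (hT : MeasurePreserving (toralAuto U) μ μ) {χ : Fin d → ℤ}
    (h : χ ∈ Gam μ) : Matrix.vecMul χ U ∈ Gam μ := by
  obtain ⟨m, hm, c, hc⟩ := h
  refine ⟨m, hm, c, ?_⟩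
  filter_upwards [hT.quasiMeasurePreserving.ae hc] with x h1
  rw [← h1, pr_toral]

lemma inv_const {μ : Measure (Torus d)} {U : Matrix (Fin d) (Fin d) ℤ}
    (herg : Ergodic (toralAuto U) μ) {χ : Fin d → ℤ}
    (h : ∀ᵐ x ∂μ, pr χ (toralAuto U x) = pr χ x) : ∃ c, ∀ᵐ x ∂μ, pr χ x = c := by
  obtain ⟨c, hc⟩ := herg.ae_eq_const_of_ae_eq_comp₀ (g := pr χ)
    (continuous_pr χ).measurable.nullMeasurable h
  exact ⟨c, hc⟩

lemma pow_expand (U : Matrix (Fin d) (Fin d) ℤ) (Γ : Submodule ℤ (Fin d → ℤ))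
    (hst : ∀ v ∈ Γ, Matrix.vecMul v (U - 1) ∈ Γ) (h : ℕ) :
    ∃ R : Matrix (Fin d) (Fin d) ℤ, (∀ v ∈ Γ, Matrix.vecMul v R ∈ Γ) ∧
      Commute (U - 1) R ∧ U ^ h - 1 = (h : ℤ) • (U - 1) + (U - 1) ^ 2 * R := by
  induction h with
  | zero => exact ⟨0, by simp, by simp, by simp⟩
  | succ h ih =>
    obtain ⟨R, hR, hc, he⟩ := ih
    refine ⟨(h : ℤ) • 1 + R + R * (U - 1), ?_, ?_, ?_⟩
    · intro v hv
      rw [Matrix.vecMul_add, Matrix.vecMul_add, Matrix.vecMul_smul, Matrix.vecMul_one,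
        ← Matrix.vecMul_vecMul]
      exact Γ.add_mem (Γ.add_mem (Γ.smul_mem _ hv) (hR v hv)) (hst _ (hR v hv))
    · exact (((Commute.one_right _).smul_right _).add_right hc).add_right
        (hc.mul_right (Commute.refl _))
    · have : U ^ (h + 1) - 1 = (U ^ h - 1) * (U - 1) + (U ^ h - 1) + (U - 1) := by
        rw [pow_succ]; noncomm_ring
      rw [this, he]
      push_cast
      simp only [mul_add, add_mul, add_smul, one_smul, smul_mul_assoc, mul_smul_comm, mul_one,
        mul_assoc, ← sq]
      abel

lemma alg_step {U : Matrix (Fin d) (Fin d) ℤ} (hU : (U - 1) ^ d = 0)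
    (Γ : Submodule ℤ (Fin d → ℤ)) (hst : ∀ v ∈ Γ, Matrix.vecMul v (U - 1) ∈ Γ)
    (hpure : ∀ (n : ℤ) v, n ≠ 0 → n • v ∈ Γ → v ∈ Γ) {h : ℕ} (hh : 0 < h) {v : Fin d → ℤ}
    (hv : Matrix.vecMul v (U ^ h - 1) ∈ Γ) : Matrix.vecMul v (U - 1) ∈ Γ := by
  obtain ⟨R, hR, hc, he⟩ := pow_expand U Γ hst h
  have hpow : ∀ (k : ℕ) w, w ∈ Γ → Matrix.vecMul w ((U - 1) ^ k) ∈ Γ := by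
    intro k
    induction k with
    | zero => intro w hw; simpa using hw
    | succ k ih =>
      intro w hw
      rw [pow_succ, ← Matrix.vecMul_vecMul]
      exact hst _ (ih w hw)
  have step : ∀ j : ℕ, Matrix.vecMul v ((U - 1) ^ (j + 2)) ∈ Γ →
      Matrix.vecMul v ((U - 1) ^ (j + 1)) ∈ Γ := by
    intro j hj
    have h1 := hpow j _ hv
    rw [Matrix.vecMul_vecMul, he] at h1
    have h2 : ((h : ℤ) • (U - 1) + (U - 1) ^ 2 * R) * (U - 1) ^ j =
        (h : ℤ) • (U - 1) ^ (j + 1) + (U - 1) ^ (j + 2) * R := by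
      rw [add_mul, smul_mul_assoc, ← pow_succ', mul_assoc, ← (hc.pow_left j).eq, ← mul_assoc,
        ← pow_add, add_comm 2 j]
    rw [h2, Matrix.vecMul_add, ← Matrix.vecMul_vecMul, Matrix.vecMul_smul] at h1
    have h3 := (Γ.add_mem_iff_left (hR _ hj)).1 h1
    exact hpure _ _ (by exact_mod_cast hh.ne') h3
  have top : Matrix.vecMul v ((U - 1) ^ (d + 1)) ∈ Γ := by
    rw [pow_succ, hU]; simp
  have all : ∀ k : ℕ, k ≤ d → Matrix.vecMul v ((U - 1) ^ (d - k + 1)) ∈ Γ := by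
    intro k
    induction k with
    | zero => intro _; simpa using top
    | succ k ih =>
      intro hk
      have := ih (by omega)
      rw [show d - k + 1 = (d - (k + 1)) + 2 by omega] at this
      exact step _ this
  simpa using all d le_rfl

end gamma

section ann
variable {d : ℕ}

/-- The annihilator in the torus of a group of characters. -/
noncomputable def Ann (Γ : Submodule ℤ (Fin d → ℤ)) : AddSubgroup (Torus d) where
  carrier := {x | ∀ χ ∈ Γ, pr χ x = 0}
  zero_mem' := fun χ _ => pr_zero_right χ
  add_mem' := by
    intro x y hx hy χ hχ
    rw [pr_add_right, hx χ hχ, hy χ hχ, add_zero]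
  neg_mem' := by
    intro x hx χ hχ
    rw [pr_neg_right, hx χ hχ, neg_zero]

lemma mem_Ann {Γ : Submodule ℤ (Fin d → ℤ)} {x : Torus d} :
    x ∈ Ann Γ ↔ ∀ χ ∈ Γ, pr χ x = 0 := Iff.rfl

lemma mem_coset {Γ : Submodule ℤ (Fin d → ℤ)} {x b : Torus d} :
    x ∈ b +ᵥ (Ann Γ : Set (Torus d)) ↔ ∀ χ ∈ Γ, pr χ x = pr χ b := by
  rw [Set.mem_vadd_set_iff_neg_vadd_mem, SetLike.mem_coe, mem_Ann]
  refine forall₂_congr fun χ _ => ?_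
  rw [vadd_eq_add, pr_add_right, pr_neg_right, neg_add_eq_zero, eq_comm]

lemma isClosed_Ann (Γ : Submodule ℤ (Fin d → ℤ)) : IsClosed (Ann Γ : Set (Torus d)) := by
  have : (Ann Γ : Set (Torus d)) = ⋂ χ ∈ Γ, {x | pr χ x = 0} := by
    ext x; simp [mem_Ann]
  rw [this]
  exact isClosed_biInter fun χ _ => isClosed_eq (continuous_pr χ) continuous_const

lemma isClosed_coset (Γ : Submodule ℤ (Fin d → ℤ)) (b : Torus d) :
    IsClosed (b +ᵥ (Ann Γ : Set (Torus d))) := (isClosed_Ann Γ).vadd b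

lemma pr_coe (χ : Fin d → ℤ) (x : Fin d → ℝ) :
    pr χ (fun i => ((x i : ℝ) : AddCircle (1 : ℝ))) = ((∑ i, (χ i : ℝ) * x i : ℝ) : AddCircle (1:ℝ)) := by
  have : ∀ s : Finset (Fin d), (∑ i ∈ s, χ i • ((x i : ℝ) : AddCircle (1 : ℝ))) =
      ((∑ i ∈ s, (χ i : ℝ) * x i : ℝ) : AddCircle (1:ℝ)) := by
    intro s
    induction s using Finset.induction_on with
    | empty => simp
    | insert a s ha ih =>
      rw [Finset.sum_insert ha, Finset.sum_insert ha, ih, AddCircle.coe_add, ← zsmul_eq_mul,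
        AddCircle.coe_zsmul]
  exact this _

lemma isConnected_Ann (Γ : Submodule ℤ (Fin d → ℤ))
    (hpure : ∀ (n : ℤ) v, n ≠ 0 → n • v ∈ Γ → v ∈ Γ) :
    IsConnected (Ann Γ : Set (Torus d)) := by
  let W : Set (Fin d → ℝ) := {x | ∀ χ ∈ Γ, ∑ i, (χ i : ℝ) * x i = 0}
  have hWc : Convex ℝ W := by
    intro x hx y hy a b _ _ _ χ hχ
    have h1 := hx χ hχ
    have h2 := hy χ hχ
    simp only [Pi.add_apply, Pi.smul_apply, smul_eq_mul, mul_add, Finset.sum_add_distrib]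
    have e1 : ∑ i, (χ i : ℝ) * (a * x i) = a * ∑ i, (χ i : ℝ) * x i := by
      rw [Finset.mul_sum]; exact Finset.sum_congr rfl fun i _ => by ring
    have e2 : ∑ i, (χ i : ℝ) * (b * y i) = b * ∑ i, (χ i : ℝ) * y i := by
      rw [Finset.mul_sum]; exact Finset.sum_congr rfl fun i _ => by ring
    rw [e1, e2, h1, h2]; simp
  have hW0 : W.Nonempty := ⟨0, fun χ _ => by simp⟩
  have hWconn : IsConnected W := ⟨hW0, hWc.isPreconnected⟩
  let π : (Fin d → ℝ) → Torus d := fun x i => ((x i : ℝ) : AddCircle (1 : ℝ))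
  have hπ : Continuous π :=
    continuous_pi fun i => (AddCircle.continuous_mk' (1 : ℝ)).comp (continuous_apply i)
  have himg : (Ann Γ : Set (Torus d)) = π '' W := by
    apply Set.Subset.antisymm
    · intro y hy
      obtain ⟨x, hx⟩ : ∃ x : Fin d → ℝ, π x = y := by
        choose x hx using fun i => QuotientAddGroup.mk_surjective (y i)
        exact ⟨x, funext hx⟩
      -- the integers `⟨χ, x⟩`
      have hz : ∀ χ : Γ, ∃ n : ℤ, (n : ℝ) = ∑ i, ((χ : Fin d → ℤ) i : ℝ) * x i := by
        intro χ
        have h := hy χ χ.2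
        rw [← hx] at h
        have h' : ((∑ i, ((χ : Fin d → ℤ) i : ℝ) * x i : ℝ) : AddCircle (1:ℝ)) = 0 := by
          rw [← pr_coe]; exact h
        obtain ⟨n, hn⟩ := (AddCircle.coe_eq_zero_iff (1 : ℝ)).1 h'
        exact ⟨n, by simpa using hn⟩
      choose φ hφ using hz
      let φ' : Γ →ₗ[ℤ] ℤ := AddMonoidHom.toIntLinearMap
        { toFun := φ
          map_zero' := by
            have := hφ 0
            simpa using this
          map_add' := by
            intro χ ψ
            have h1 := hφ (χ + ψ)
            have : ((φ (χ + ψ) : ℤ) : ℝ) = ((φ χ + φ ψ : ℤ) : ℝ) := by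
              rw [h1]; push_cast
              rw [hφ, hφ, ← Finset.sum_add_distrib]
              exact Finset.sum_congr rfl fun i _ => by simp [add_mul]
            exact_mod_cast this }
      have : Module.IsTorsionFree ℤ ((Fin d → ℤ) ⧸ Γ) := by
        rw [Module.isTorsionFree_iff_smul_eq_zero]
        intro n q h
        obtain ⟨v, rfl⟩ := Γ.mkQ_surjective q
        by_cases hn : n = 0
        · exact Or.inl hn
        · right
          rw [← map_smul, Submodule.mkQ_apply, Submodule.Quotient.mk_eq_zero] at h
          rw [Submodule.mkQ_apply, Submodule.Quotient.mk_eq_zero]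
          exact hpure n v hn h
      obtain ⟨s, hs⟩ := Module.projective_lifting_property Γ.mkQ LinearMap.id Γ.mkQ_surjective
      have hp : ∀ v, v - s (Γ.mkQ v) ∈ Γ := by
        intro v
        rw [← Submodule.Quotient.mk_eq_zero, ← Submodule.mkQ_apply, map_sub, sub_eq_zero]
        exact (LinearMap.congr_fun hs (Γ.mkQ v)).symm
      let p : (Fin d → ℤ) →ₗ[ℤ] Γ :=
        LinearMap.codRestrict Γ (LinearMap.id - s ∘ₗ Γ.mkQ) hp
      have hpid : ∀ χ : Γ, p χ = χ := by
        intro χ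
        apply Subtype.ext
        change (χ : Fin d → ℤ) - s (Γ.mkQ χ) = χ
        have : Γ.mkQ (χ : Fin d → ℤ) = 0 := by
          rw [Submodule.mkQ_apply, Submodule.Quotient.mk_eq_zero]; exact χ.2
        rw [this]; simp
      let z : Fin d → ℤ := fun i => φ' (p (Pi.single i 1))
      have hzz : ∀ χ : Γ, φ χ = ∑ i, (χ : Fin d → ℤ) i * z i := by
        intro χ
        have h1 : φ χ = (φ' ∘ₗ p) (χ : Fin d → ℤ) := by
          change φ χ = φ' (p χ)
          rw [hpid]; rfl
        rw [h1, LinearMap.pi_apply_eq_sum_univ (φ' ∘ₗ p)]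
        refine Finset.sum_congr rfl fun i _ => ?_
        rw [smul_eq_mul]
        congr 1
        change φ' (p _) = φ' (p _)
        congr 2
        ext j
        simp [Pi.single_apply, eq_comm]
      refine ⟨fun i => x i - z i, ?_, ?_⟩
      · intro χ hχ
        have h1 := hφ ⟨χ, hχ⟩
        rw [hzz] at h1
        push_cast at h1
        simp only [mul_sub, Finset.sum_sub_distrib]
        rw [← h1]; simp
      · rw [← hx]
        ext i
        change ((x i - (z i : ℝ) : ℝ) : AddCircle (1 : ℝ)) = ((x i : ℝ) : AddCircle (1 : ℝ))
        rw [AddCircle.coe_sub, sub_eq_self, AddCircle.coe_eq_zero_iff]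
        exact ⟨z i, by simp⟩
    · rintro _ ⟨x, hx, rfl⟩ χ hχ
      change pr χ (fun i => ((x i : ℝ) : AddCircle (1 : ℝ))) = 0
      rw [pr_coe, hx χ hχ]; simp
  rw [himg]
  exact hWconn.image π hπ.continuousOn

lemma Ann_ne_top {Γ : Submodule ℤ (Fin d → ℤ)} {χ : Fin d → ℤ} (hχ : χ ∈ Γ) (h0 : χ ≠ 0) :
    Ann Γ ≠ ⊤ := by
  intro h
  obtain ⟨i, hi⟩ := Function.ne_iff.1 h0
  have hi' : (χ i : ℝ) ≠ 0 := by exact_mod_cast hi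
  let x : Fin d → ℝ := Pi.single i (1 / (2 * (χ i : ℝ)))
  have hx : (fun i => ((x i : ℝ) : AddCircle (1 : ℝ))) ∈ Ann Γ := by rw [h]; trivial
  have := hx χ hχ
  rw [pr_coe] at this
  have e : ∑ j, (χ j : ℝ) * x j = 1 / 2 := by
    rw [Finset.sum_eq_single i]
    · simp [x]; field_simp
    · intro j _ hj; simp [x, hj]
    · simp
  rw [e, AddCircle.coe_eq_zero_iff] at this
  obtain ⟨n, hn⟩ := this
  have h2 : (2 * n : ℝ) = 1 := by
    have : (n : ℝ) = 1 / 2 := by simpa using hn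
    rw [this]; norm_num
  have h3 : 2 * n = 1 := by exact_mod_cast h2
  omega

lemma exists_inv_char {U : Matrix (Fin d) (Fin d) ℤ} (hd : 0 < d) (hU : (U - 1) ^ d = 0) :
    ∃ χ : Fin d → ℤ, χ ≠ 0 ∧ Matrix.vecMul χ U = χ := by
  by_contra hcon
  push Not at hcon
  have hinj : ∀ v : Fin d → ℤ, Matrix.vecMul v (U - 1) = 0 → v = 0 := by
    intro v hv
    by_contra h0
    apply hcon v h0
    rw [Matrix.vecMul_sub, Matrix.vecMul_one, sub_eq_zero] at hv
    exact hv
  have hp : ∀ (k : ℕ) (v : Fin d → ℤ), Matrix.vecMul v ((U - 1) ^ k) = 0 → v = 0 := by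
    intro k
    induction k with
    | zero => intro v hv; simpa using hv
    | succ k ih =>
      intro v hv
      rw [pow_succ, ← Matrix.vecMul_vecMul] at hv
      exact ih v (hinj _ hv)
  have := hp d (fun _ => 1) (by rw [hU]; simp)
  have := congrFun this ⟨0, hd⟩
  simp at this

end ann

section cosets
variable {d : ℕ}

lemma exists_pos_coset (μ : Measure (Torus d)) [IsProbabilityMeasure μ] :
    ∃ a : Torus d, 0 < μ (a +ᵥ (Ann (Gam μ) : Set (Torus d))) := by
  obtain ⟨S, hS⟩ := (IsNoetherian.noetherian (Gam μ) : (Gam μ).FG)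
  have hfin : ∀ χ : S, ∃ F : Set (AddCircle (1 : ℝ)), F.Finite ∧ ∀ᵐ x ∂μ, pr χ x ∈ F := by
    intro χ
    have hχ : (χ : Fin d → ℤ) ∈ Gam μ := by
      rw [← hS]; exact Submodule.subset_span χ.2
    obtain ⟨n, hn, c, hc⟩ := hχ
    obtain ⟨x₀, hx₀⟩ := hc.exists
    refine ⟨(fun u => u + pr χ x₀) '' {u | n • u = 0}, ?_, ?_⟩
    · refine Set.Finite.image _ (AddCircle.finite_torsion_of_isSMulRegular_int _ _ ?_)
      exact .of_right_eq_zero_of_smul fun _ ↦ by simp [hn]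
    · filter_upwards [hc] with x hx
      refine ⟨pr χ x - pr χ x₀, ?_, by simp⟩
      change n • (pr χ x - pr χ x₀) = 0
      rw [smul_sub, hx, hx₀, sub_self]
  choose F hF hFae using hfin
  let Φ : Torus d → (S → AddCircle (1 : ℝ)) := fun x χ => pr χ x
  have hae : ∀ᵐ x ∂μ, Φ x ∈ Set.pi Set.univ F := by
    have : ∀ᵐ x ∂μ, ∀ χ : S, pr χ x ∈ F χ := ae_all_iff.2 hFae
    filter_upwards [this] with x hx χ _
    exact hx χ
  have hpi : (Set.pi Set.univ F).Finite := Set.Finite.pi' hF |>.subset (by intro f hf i; exact hf i trivial)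
  by_contra hcon
  push Not at hcon
  have hnull : μ (⋃ v ∈ Set.pi Set.univ F, Φ ⁻¹' {v}) = 0 := by
    rw [measure_biUnion_null_iff hpi.countable]
    intro v _
    by_cases hv : ∃ a, Φ a = v
    · obtain ⟨a, rfl⟩ := hv
      refine measure_mono_null ?_ (nonpos_iff_eq_zero.1 (hcon a))
      intro x hx
      rw [mem_coset]
      intro χ hχ
      rw [← hS] at hχ
      induction hχ using Submodule.span_induction with
      | mem χ h => exact congrFun hx ⟨χ, h⟩
      | zero => rw [pr_zero_left, pr_zero_left]
      | add χ ψ _ _ h1 h2 => rw [pr_add_left, pr_add_left, h1, h2]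
      | smul n χ _ h => rw [pr_smul_left, pr_smul_left, h]
    · have : Φ ⁻¹' {v} = ∅ := by
        ext x; simp only [Set.mem_preimage, Set.mem_singleton_iff, Set.mem_empty_iff_false, iff_false]
        exact fun h => hv ⟨x, h⟩
      rw [this]; simp
  have huniv : ∀ᵐ x ∂μ, False := by
    have h2 : ∀ᵐ x ∂μ, x ∉ ⋃ v ∈ Set.pi Set.univ F, Φ ⁻¹' {v} := measure_eq_zero_iff_ae_notMem.1 hnull
    filter_upwards [hae, h2] with x hx hx2
    exact hx2 (Set.mem_biUnion hx rfl)
  obtain ⟨_, h⟩ := huniv.exists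
  exact h

lemma coset_structure {U : Matrix (Fin d) (Fin d) ℤ} (μ : Measure (Torus d))
    [IsProbabilityMeasure μ] (herg : Ergodic (toralAuto U) μ) :
    ∃ (m : ℕ) (a : Torus d), 0 < m ∧
      (∀ i, 0 < μ ((toralAuto U)^[i] a +ᵥ (Ann (Gam μ) : Set (Torus d)))) ∧
      (∀ᵐ x ∂μ, x ∈ ⋃ i ∈ Finset.range m,
        ((toralAuto U)^[i] a +ᵥ (Ann (Gam μ) : Set (Torus d)))) ∧
      (∀ χ ∈ Gam μ, ∀ᵐ x ∂μ, pr χ ((toralAuto U)^[m] x) = pr χ x) := by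
  obtain ⟨a, ha⟩ := exists_pos_coset μ
  have hmp := herg.toMeasurePreserving
  set T := toralAuto U with hT
  have hst : ∀ (k : ℕ), ∀ χ ∈ Gam μ, Matrix.vecMul χ (U ^ k) ∈ Gam μ := by
    intro k
    induction k with
    | zero => intro χ h; simpa using h
    | succ k ih => intro χ h; rw [pow_succ, ← Matrix.vecMul_vecMul]; exact Gam_stable hmp (ih χ h)
  have hshift : ∀ (k : ℕ) (x b : Torus d), x ∈ b +ᵥ (Ann (Gam μ) : Set (Torus d)) →
      T^[k] x ∈ T^[k] b +ᵥ (Ann (Gam μ) : Set (Torus d)) := by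
    intro k x b hx
    rw [mem_coset] at hx ⊢
    intro χ hχ
    rw [pr_iter, pr_iter]
    exact hx _ (hst k χ hχ)
  obtain ⟨x, hx, m, hm, hxm⟩ := hmp.conservative.exists_mem_iterate_mem
    (isClosed_coset (Gam μ) a).measurableSet.nullMeasurableSet ha.ne'
  have hma : ∀ χ ∈ Gam μ, pr χ (T^[m] a) = pr χ a := by
    intro χ hχ
    have h1 := mem_coset.1 (hshift m x a hx) χ hχ
    rw [← h1]
    exact mem_coset.1 hxm χ hχ
  have hfull : ∀ᵐ x ∂μ, x ∈ ⋃ i ∈ Finset.range m, (T^[i] a +ᵥ (Ann (Gam μ) : Set (Torus d))) := by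
    have hmeas : MeasurableSet (⋃ i ∈ Finset.range m,
        (T^[i] a +ᵥ (Ann (Gam μ) : Set (Torus d)))) :=
      Finset.measurableSet_biUnion _ fun i _ => (isClosed_coset _ _).measurableSet
    have hsub : (⋃ i ∈ Finset.range m, (T^[i] a +ᵥ (Ann (Gam μ) : Set (Torus d)))) ⊆
        T ⁻¹' (⋃ i ∈ Finset.range m, (T^[i] a +ᵥ (Ann (Gam μ) : Set (Torus d)))) := by
      intro y hy
      simp only [Set.mem_iUnion, Finset.mem_range, Set.mem_preimage, exists_prop] at hy ⊢
      obtain ⟨i, hi, hy⟩ := hy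
      have h1 := hshift 1 y _ hy
      rw [Function.iterate_one, ← Function.iterate_succ_apply' T] at h1
      by_cases h : i + 1 < m
      · exact ⟨i + 1, h, h1⟩
      · have : i + 1 = m := by omega
        refine ⟨0, by omega, ?_⟩
        rw [mem_coset] at h1 ⊢
        intro χ hχ
        rw [h1 χ hχ]
        change pr χ (T^[i + 1] a) = _
        rw [this, hma χ hχ]; rfl
    rcases herg.ae_empty_or_univ_of_ae_le_preimage hmeas.nullMeasurableSet
      (Filter.Eventually.of_forall hsub) with h | h
    · exfalso
      have h0 := ae_eq_empty.1 h
      refine ha.ne' (measure_mono_null ?_ h0)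
      intro y hy
      simp only [Set.mem_iUnion, Finset.mem_range, exists_prop]
      exact ⟨0, by omega, hy⟩
    · exact Filter.eventuallyEq_univ.1 h
  refine ⟨m, a, by omega, ?_, hfull, ?_⟩
  · intro i
    refine lt_of_lt_of_le ha ?_
    rw [← (hmp.iterate i).measure_preimage
      (isClosed_coset (Gam μ) (T^[i] a)).measurableSet.nullMeasurableSet]
    exact measure_mono fun y hy => hshift i y a hy
  · intro χ hχ
    filter_upwards [hfull] with x hx
    simp only [Set.mem_iUnion, Finset.mem_range, exists_prop] at hx
    obtain ⟨i, hi, hx⟩ := hx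
    have h1 := mem_coset.1 (hshift m x _ hx) χ hχ
    rw [h1, mem_coset.1 hx χ hχ, ← Function.iterate_add_apply, add_comm, Function.iterate_add_apply,
      pr_iter U i, pr_iter U i]
    exact hma _ (hst i χ hχ)

end cosets

section vanish
variable {d : ℕ}

lemma ch_iter (U : Matrix (Fin d) (Fin d) ℤ) (k : ℕ) (χ : Fin d → ℤ) (x : Torus d) :
    ch χ ((toralAuto U)^[k] x) = ch (Matrix.vecMul χ (U ^ k)) x := by
  rw [ch, ch, pr_iter]

lemma integral_comp_mp {μ : Measure (Torus d)} {T : Torus d → Torus d}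
    (hT : MeasurePreserving T μ μ) {g : Torus d → ℂ} (hg : Measurable g) :
    ∫ x, g (T x) ∂μ = ∫ x, g x ∂μ := by
  conv_rhs => rw [← hT.map_eq]
  rw [integral_map hT.measurable.aemeasurable hg.aestronglyMeasurable]

lemma integral_ch_vecMul {U : Matrix (Fin d) (Fin d) ℤ} {μ : Measure (Torus d)}
    (hT : MeasurePreserving (toralAuto U) μ μ) (k : ℕ) (χ : Fin d → ℤ) :
    ∫ x, ch (Matrix.vecMul χ (U ^ k)) x ∂μ = ∫ x, ch χ x ∂μ := by
  rw [← integral_comp_mp (hT.iterate k) (continuous_ch χ).measurable]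
  simp only [ch_iter]

lemma ch_neg (χ : Fin d → ℤ) (x : Torus d) : ch (-χ) x = (starRingEnd ℂ) (ch χ x) := by
  have h := conj_ch_mul χ 0 x
  have h0 : ch (0 : Fin d → ℤ) x = 1 := by simp [ch, pr_zero_left]
  rw [h0, mul_one, zero_sub] at h
  exact h.symm

/-- If the iterates of a character are pairwise orthogonal then its integral vanishes. -/
lemma vanish_orth {U : Matrix (Fin d) (Fin d) ℤ} {μ : Measure (Torus d)} [IsProbabilityMeasure μ]
    (hT : MeasurePreserving (toralAuto U) μ μ) (χ : Fin d → ℤ)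
    (h : ∀ k : ℕ, 0 < k → ∫ x, ch (Matrix.vecMul χ (U ^ k - 1)) x ∂μ = 0) :
    ∫ x, ch χ x ∂μ = 0 := by
  have hlt : ∀ i j : ℕ, i < j →
      ∫ x, ch (Matrix.vecMul χ (U ^ j) - Matrix.vecMul χ (U ^ i)) x ∂μ = 0 := by
    intro i j hij
    have e : Matrix.vecMul χ (U ^ j) - Matrix.vecMul χ (U ^ i) =
        Matrix.vecMul (Matrix.vecMul χ (U ^ (j - i) - 1)) (U ^ i) := by
      rw [Matrix.vecMul_vecMul, sub_mul, one_mul, ← pow_add, Nat.sub_add_cancel hij.le,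
        Matrix.vecMul_sub]
    rw [e, integral_ch_vecMul hT]
    exact h _ (by omega)
  have hne : ∀ i j : ℕ, ∫ x, ch (Matrix.vecMul χ (U ^ j) - Matrix.vecMul χ (U ^ i)) x ∂μ =
      if i = j then 1 else 0 := by
    intro i j
    split_ifs with hij
    · subst hij; simp [ch, pr_zero_left]
    · rcases lt_or_gt_of_ne hij with h1 | h1
      · exact hlt i j h1
      · have := hlt j i h1
        rw [← neg_sub]
        simp only [ch_neg]
        rw [integral_conj, this, map_zero]
  set I := ∫ x, ch χ x ∂μ with hI
  have key : ∀ N : ℕ, (N * ‖I‖) ^ 2 ≤ N := by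
    intro N
    let S : Torus d → ℂ := fun x => ∑ j ∈ Finset.range N, ch (Matrix.vecMul χ (U ^ j)) x
    have hSc : Continuous S := continuous_finsetSum _ fun j _ => continuous_ch _
    have hSb : ∀ x, ‖S x‖ ≤ N := by
      intro x
      refine (norm_sum_le _ _).trans ?_
      simp [norm_ch]
    have hSi : Integrable S μ := Integrable.of_bound hSc.aestronglyMeasurable N
      (Filter.Eventually.of_forall hSb)
    have hS2i : Integrable (fun x => ‖S x‖ ^ 2) μ :=
      Integrable.of_bound (by fun_prop) ((N : ℝ) ^ 2)
        (Filter.Eventually.of_forall fun x => by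
          rw [Real.norm_of_nonneg (by positivity)]
          exact pow_le_pow_left₀ (norm_nonneg _) (hSb x) 2)
    have hconv : ConvexOn ℝ Set.univ (fun z : ℂ => ‖z‖ ^ 2) :=
      convexOn_univ_norm.pow (fun z _ => norm_nonneg z) 2
    have hJ := hconv.map_integral_le (μ := μ) (f := S) (by fun_prop) isClosed_univ (by simp) hSi hS2i
    have hSint : ∫ x, S x ∂μ = N * I := by
      simp only [S]
      rw [integral_finsetSum _ fun j _ => integrable_ch _ μ]
      simp only [integral_ch_vecMul hT]
      simp [hI]
    have hS2 : ∫ x, ‖S x‖ ^ 2 ∂μ = N := by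
      have : ((∫ x, ‖S x‖ ^ 2 ∂μ : ℝ) : ℂ) = N := by
        rw [← integral_complex_ofReal]
        have e : ∀ x, ((‖S x‖ ^ 2 : ℝ) : ℂ) = ∑ i ∈ Finset.range N, ∑ j ∈ Finset.range N,
            ch (Matrix.vecMul χ (U ^ j) - Matrix.vecMul χ (U ^ i)) x := by
          intro x
          push_cast
          rw [← Complex.conj_mul']
          simp only [S, map_sum]
          rw [Finset.sum_mul_sum]
          simp only [conj_ch_mul]
        simp only [e]
        rw [integral_finsetSum _ fun i _ => integrable_finsetSum _ fun j _ => integrable_ch _ μ]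
        have : ∀ i ∈ Finset.range N, ∫ x, ∑ j ∈ Finset.range N,
            ch (Matrix.vecMul χ (U ^ j) - Matrix.vecMul χ (U ^ i)) x ∂μ = 1 := by
          intro i hi
          rw [integral_finsetSum _ fun j _ => integrable_ch _ μ]
          simp only [hne]
          rw [Finset.sum_ite_eq, if_pos hi]
        rw [Finset.sum_congr rfl this]
        simp
      exact_mod_cast this
    rw [hS2, hSint] at hJ
    simpa using hJ
  by_contra h0
  have hp : 0 < ‖I‖ ^ 2 := by positivity
  obtain ⟨N, hN⟩ := exists_nat_gt (1 / ‖I‖ ^ 2)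
  have hN0 : (0 : ℝ) < N := lt_trans (by positivity) hN
  have h1 := key N
  rw [div_lt_iff₀ hp] at hN
  nlinarith

lemma vanish {U : Matrix (Fin d) (Fin d) ℤ} (hU : (U - 1) ^ d = 0) {μ : Measure (Torus d)}
    [IsProbabilityMeasure μ] (herg : Ergodic (toralAuto U) μ) {m : ℕ} (hm : 0 < m)
    (hinv : ∀ χ ∈ Gam μ, ∀ᵐ x ∂μ, pr χ ((toralAuto U)^[m] x) = pr χ x) (k : ℕ) :
    ∀ χ : Fin d → ℤ, Matrix.vecMul χ ((U - 1) ^ k) = 0 → χ ∉ Gam μ → ∫ x, ch χ x ∂μ = 0 := by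
  have hmp := herg.toMeasurePreserving
  have hst : ∀ χ ∈ Gam μ, Matrix.vecMul χ U ∈ Gam μ := fun χ h => Gam_stable hmp h
  have hst' : ∀ χ ∈ Gam μ, Matrix.vecMul χ (U - 1) ∈ Gam μ := by
    intro χ h
    rw [Matrix.vecMul_sub, Matrix.vecMul_one]
    exact (Gam μ).sub_mem (hst χ h) h
  induction k with
  | zero =>
    intro χ h0 hχ
    rw [pow_zero, Matrix.vecMul_one] at h0
    exact absurd (h0 ▸ (Gam μ).zero_mem) hχ
  | succ k ih =>
    intro χ h0 hχ
    by_cases hB : Matrix.vecMul χ (U - 1) ∈ Gam μ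
    · obtain ⟨n, hn, c, hc⟩ : ∃ n : ℕ, 0 < n ∧ ∃ c : AddCircle (1 : ℝ),
          ∀ᵐ x ∂μ, (n : ℤ) • pr (Matrix.vecMul χ (U - 1)) x = c := by
        obtain ⟨n, hn, c, hc⟩ := hB
        rcases Int.natAbs_eq n with h | h
        · exact ⟨n.natAbs, Int.natAbs_pos.2 hn, c, by rw [← h]; exact hc⟩
        · refine ⟨n.natAbs, Int.natAbs_pos.2 hn, -c, ?_⟩
          have : ((n.natAbs : ℕ) : ℤ) = -n := by omega
          rw [this]
          filter_upwards [hc] with x hx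
          rw [neg_smul, hx]
      have hstep : ∀ᵐ x ∂μ, (n : ℤ) • pr χ (toralAuto U x) = (n : ℤ) • pr χ x + c := by
        filter_upwards [hc] with x hx
        rw [← hx, pr_toral, Matrix.vecMul_sub, Matrix.vecMul_one, pr_sub_left, smul_sub]
        abel
      have hiter : ∀ j : ℕ, ∀ᵐ x ∂μ,
          (n : ℤ) • pr χ ((toralAuto U)^[j] x) = (n : ℤ) • pr χ x + j • c := by
        intro j
        induction j with
        | zero => simp
        | succ j ihj =>
          filter_upwards [ihj, (hmp.iterate j).quasiMeasurePreserving.ae hstep] with x h1 h2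
          rw [Function.iterate_succ_apply', h2, h1, succ_nsmul]
          abel
      by_cases hcm : m • c = 0
      · exfalso
        apply hχ
        have : ∀ᵐ x ∂μ, pr (((m : ℤ) * n) • χ) (toralAuto U x) = pr (((m : ℤ) * n) • χ) x := by
          filter_upwards [hstep] with x hx
          rw [pr_smul_left, pr_smul_left, mul_smul, mul_smul, hx, smul_add, natCast_zsmul c m, hcm,
            add_zero]
        obtain ⟨e, he⟩ := inv_const herg this
        refine ⟨(m : ℤ) * n, by positivity, e, ?_⟩
        filter_upwards [he] with x hx
        rw [← hx, pr_smul_left]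
      · set ψ := Matrix.vecMul χ (U ^ m - 1) with hψ
        have hψe : ψ = Matrix.vecMul χ (U ^ m) - χ := by
          rw [hψ, Matrix.vecMul_sub, Matrix.vecMul_one]
        have hψG : ψ ∈ Gam μ := by
          have hpow : ∀ (j : ℕ) w, w ∈ Gam μ → Matrix.vecMul w (U ^ j) ∈ Gam μ := by
            intro j
            induction j with
            | zero => intro w hw; simpa using hw
            | succ j ihj =>
              intro w hw
              rw [pow_succ, ← Matrix.vecMul_vecMul]
              exact hst _ (ihj w hw)
          rw [hψ, ← mul_geom_sum, ← Matrix.vecMul_vecMul, Matrix.vecMul_sum]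
          exact (Gam μ).sum_mem fun i _ => hpow i _ hB
        set w : ℂ := (AddCircle.toCircle (m • c) : ℂ) with hw
        have hw1 : w ≠ 1 := by
          intro h1
          apply hcm
          apply AddCircle.injective_toCircle (T := (1 : ℝ)) one_ne_zero
          rw [AddCircle.toCircle_zero]
          exact Circle.ext (by rw [Circle.coe_one]; exact h1)
        have hpw : ∀ᵐ x ∂μ, ch ψ x ^ n = w := by
          filter_upwards [hiter m] with x hx
          rw [← ch_smul, ch, pr_smul_left, hψe, pr_sub_left, ← pr_iter, smul_sub, hx,
            add_sub_cancel_left]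
        have hbd : ∀ᵐ x ∂μ, ‖w - 1‖ ≤ n * ‖ch ψ x - 1‖ := by
          filter_upwards [hpw] with x hx
          rw [← hx, ← geom_sum_mul, norm_mul]
          refine mul_le_mul_of_nonneg_right ?_ (norm_nonneg _)
          refine (norm_sum_le _ _).trans ?_
          simp [norm_ch]
        have hwp : 0 < ‖w - 1‖ := norm_pos_iff.2 (sub_ne_zero.2 hw1)
        let g : Torus d → ℂ := fun x => ch χ x / (ch ψ x - 1)
        have hgm : Measurable g :=
          (continuous_ch χ).measurable.div ((continuous_ch ψ).measurable.sub_const 1)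
        have hgb : ∀ᵐ x ∂μ, ‖g x‖ ≤ n / ‖w - 1‖ := by
          filter_upwards [hbd] with x hx
          simp only [g]
          rw [norm_div, norm_ch]
          have : 0 < ‖ch ψ x - 1‖ := by
            by_contra hcon
            have h00 : ‖ch ψ x - 1‖ = 0 := le_antisymm (not_lt.1 hcon) (norm_nonneg _)
            rw [h00, mul_zero] at hx
            exact absurd hx (not_le.2 hwp)
          rw [div_le_div_iff₀ this hwp, one_mul]
          exact hx
        have hgi : Integrable g μ := Integrable.of_bound hgm.aestronglyMeasurable _ hgb
        have hmpm := hmp.iterate m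
        have hgi' : Integrable (fun x => g ((toralAuto U)^[m] x)) μ :=
          hmpm.integrable_comp_of_integrable hgi
        have heq : ∀ᵐ x ∂μ, ch χ x = g ((toralAuto U)^[m] x) - g x := by
          filter_upwards [hbd, hinv ψ hψG] with x hx hx2
          have h1 : ch ψ x - 1 ≠ 0 := by
            intro h00
            rw [h00, norm_zero, mul_zero] at hx
            exact absurd hx (not_le.2 hwp)
          have h2 : ch ψ ((toralAuto U)^[m] x) = ch ψ x := by rw [ch, ch, hx2]
          have h3 : ch χ ((toralAuto U)^[m] x) = ch ψ x * ch χ x := by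
            rw [ch_iter, ← ch_add, hψe, sub_add_cancel]
          simp only [g]
          rw [h2, h3]
          field_simp
        rw [integral_congr_ae heq, integral_sub hgi' hgi, integral_comp_mp hmpm hgm, sub_self]
    · refine vanish_orth hmp χ fun h hh => ih _ ?_ ?_
      · rw [Matrix.vecMul_vecMul, ← geom_sum_mul, mul_assoc, ← pow_succ']
        have hcomm : Commute (∑ i ∈ Finset.range h, U ^ i) ((U - 1) ^ (k + 1)) := by
          refine Commute.pow_right ?_ _
          refine Commute.sub_right ?_ (Commute.one_right _)
          exact Commute.sum_left _ _ _ fun i _ => (Commute.refl U).pow_left i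
        rw [hcomm.eq, ← Matrix.vecMul_vecMul, h0, Matrix.zero_vecMul]
      · intro hcon
        exact hB (alg_step hU (Gam μ) hst' (fun n v hn hv => Gam_pure hn hv) hh hcon)

lemma ann_invariant {U : Matrix (Fin d) (Fin d) ℤ} (hU : (U - 1) ^ d = 0) {μ : Measure (Torus d)}
    [IsProbabilityMeasure μ] (herg : Ergodic (toralAuto U) μ) {m : ℕ} (hm : 0 < m)
    (hinv : ∀ χ ∈ Gam μ, ∀ᵐ x ∂μ, pr χ ((toralAuto U)^[m] x) = pr χ x)
    (h : Torus d) (hh : h ∈ Ann (Gam μ)) : μ.map (fun x => h + x) = μ := by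
  have hmeas : Measurable (fun x : Torus d => h + x) := (continuous_const.add continuous_id).measurable
  have : IsProbabilityMeasure (μ.map (fun x => h + x)) :=
    Measure.isProbabilityMeasure_map hmeas.aemeasurable
  refine ext_fourier _ _ fun χ => ?_
  rw [integral_map hmeas.aemeasurable (continuous_ch χ).aestronglyMeasurable]
  have e : ∀ x, ch χ (h + x) = ch χ h * ch χ x := by
    intro x
    simp only [ch]
    rw [pr_add_right, AddCircle.toCircle_add, Circle.coe_mul]
  simp only [e]
  rw [integral_const_mul]
  by_cases hχ : χ ∈ Gam μ
  · have : ch χ h = 1 := by rw [ch, hh χ hχ, AddCircle.toCircle_zero, Circle.coe_one]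
    rw [this, one_mul]
  · rw [vanish hU herg hm hinv d χ (by rw [hU]; simp) hχ, mul_zero]

/-- A probability measure invariant under a closed subgroup restricts to Haar on cosets. -/
lemma restrict_coset (μ : Measure (Torus d)) [IsProbabilityMeasure μ] (H : AddSubgroup (Torus d))
    (hH : IsClosed (H : Set (Torus d)))
    (hinv : ∀ h ∈ H, μ.map (fun x => h + x) = μ) (ν : Measure H) [ν.IsAddHaarMeasure]
    [IsProbabilityMeasure ν] (b : Torus d) :
    μ.restrict (b +ᵥ (H : Set (Torus d))) =
      μ (b +ᵥ (H : Set (Torus d))) • Measure.map (fun h : H => b + (h : Torus d)) ν := by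
  have : CompactSpace H := isCompact_iff_compactSpace.1 hH.isCompact
  let ι : H → Torus d := fun h => b + (h : Torus d)
  have hι : MeasurableEmbedding ι :=
    (Homeomorph.addLeft b).measurableEmbedding.comp (MeasurableEmbedding.subtype_coe hH.measurableSet)
  have hrange : Set.range ι = b +ᵥ (H : Set (Torus d)) := by
    ext x
    simp only [ι, Set.mem_range, Set.mem_vadd_set, SetLike.mem_coe, vadd_eq_add]
    exact ⟨fun ⟨y, hy⟩ => ⟨y, y.2, hy⟩, fun ⟨y, hy, h⟩ => ⟨⟨y, hy⟩, h⟩⟩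
  set ρ := μ.comap ι with hρ
  have hρf : IsFiniteMeasure ρ := ⟨by rw [hρ, hι.comap_apply]; exact measure_lt_top _ _⟩
  have hρinv : ρ.IsAddLeftInvariant := by
    refine ⟨fun g => ?_⟩
    ext s hs
    have hm : Measurable (fun x : H => g + x) := (continuous_const.add continuous_id).measurable
    have hm' : Measurable (fun x : Torus d => (g : Torus d) + x) :=
      (continuous_const.add continuous_id).measurable
    rw [Measure.map_apply hm hs, hρ, hι.comap_apply, hι.comap_apply]
    conv_rhs => rw [← hinv g g.2]
    rw [Measure.map_apply hm' (hι.measurableSet_image.2 hs)]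
    congr 1
    ext x
    simp only [ι, Set.mem_image, Set.mem_preimage]
    constructor
    · rintro ⟨y, hy, rfl⟩
      exact ⟨g + y, hy, by push_cast; abel⟩
    · rintro ⟨y, hy, h⟩
      refine ⟨-g + y, by simpa using hy, ?_⟩
      push_cast
      rw [← neg_add_eq_iff_eq_add.2 h.symm.symm] <;> abel
  have huniq := Measure.isAddLeftInvariant_eq_smul ρ ν
  set c := Measure.addHaarScalarFactor ρ ν
  have hmass : μ (b +ᵥ (H : Set (Torus d))) = c := by
    have h1 : ρ Set.univ = μ (b +ᵥ (H : Set (Torus d))) := by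
      rw [hρ, hι.comap_apply, Set.image_univ, hrange]
    rw [← h1, huniq]
    simp
  rw [← hrange, ← hι.map_comap, ← hρ, hrange, hmass, huniq]
  simp [ι]

end vanish
end UniTorus

/-- Classification of ergodic invariant measures for a unipotent toral automorphism: the
support is a finite union of cosets `Uⁱa + H` of a closed connected proper subgroup `H`, and
on each coset the measure is a translate of the (normalized) Haar measure of `H`. -/
theorem ergodic_measure_classification_unipotent
    {d : ℕ} (hd : 0 < d) (U : Matrix (Fin d) (Fin d) ℤ)
    (hUdet : IsUnit U.det) (hUuni : (U - 1) ^ d = 0)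
    (μ : Measure (Torus d)) (hμp : IsProbabilityMeasure μ)
    (herg : Ergodic (toralAuto U) μ) :
    ∃ (m : ℕ) (a : Torus d) (H : AddSubgroup (Torus d)), 0 < m ∧
      IsClosed (H : Set (Torus d)) ∧ IsConnected (H : Set (Torus d)) ∧ H ≠ ⊤ ∧
      msupport μ = ⋃ i ∈ Finset.range m, ((toralAuto U)^[i] a +ᵥ (H : Set (Torus d))) ∧
      ∃ ν : Measure H, ν.IsAddHaarMeasure ∧ IsProbabilityMeasure ν ∧
        ∀ i < m, μ.restrict ((toralAuto U)^[i] a +ᵥ (H : Set (Torus d))) =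
          μ ((toralAuto U)^[i] a +ᵥ (H : Set (Torus d))) •
            Measure.map (fun h : H => (toralAuto U)^[i] a + (h : Torus d)) ν := by
  classical
  obtain ⟨m, a, hm, hpos, hfull, hinv⟩ := UniTorus.coset_structure μ herg
  obtain ⟨χ, hχ0, hχ⟩ := UniTorus.exists_inv_char hd hUuni
  have hχG : χ ∈ UniTorus.Gam μ := by
    obtain ⟨c, hc⟩ := UniTorus.inv_const (χ := χ) herg
      (Filter.Eventually.of_forall fun x => by rw [UniTorus.pr_toral, hχ])
    exact ⟨1, one_ne_zero, c, by simpa using hc⟩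
  have hcl := UniTorus.isClosed_Ann (UniTorus.Gam μ)
  have hcomp : CompactSpace (UniTorus.Ann (UniTorus.Gam μ)) :=
    isCompact_iff_compactSpace.1 hcl.isCompact
  let ν : Measure (UniTorus.Ann (UniTorus.Gam μ)) := Measure.addHaarMeasure ⊤
  have hνH : ν.IsAddHaarMeasure := inferInstanceAs (Measure.addHaarMeasure ⊤).IsAddHaarMeasure
  have hνp : IsProbabilityMeasure ν := ⟨by
    have h := Measure.addHaarMeasure_self
      (K₀ := (⊤ : TopologicalSpace.PositiveCompacts (UniTorus.Ann (UniTorus.Gam μ))))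
    simpa using h⟩
  have hres : ∀ b : Torus d, μ.restrict (b +ᵥ (UniTorus.Ann (UniTorus.Gam μ) : Set (Torus d))) =
      μ (b +ᵥ (UniTorus.Ann (UniTorus.Gam μ) : Set (Torus d))) •
        Measure.map (fun h : UniTorus.Ann (UniTorus.Gam μ) => b + (h : Torus d)) ν := fun b =>
    UniTorus.restrict_coset μ _ hcl
      (fun h hh => UniTorus.ann_invariant hUuni herg hm hinv h hh) ν b
  refine ⟨m, a, UniTorus.Ann (UniTorus.Gam μ), hm, hcl,
    UniTorus.isConnected_Ann _ (fun n v hn hv => UniTorus.Gam_pure hn hv),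
    UniTorus.Ann_ne_top hχG hχ0, ?_, ν, hνH, hνp, fun i _ => hres _⟩
  apply Set.Subset.antisymm
  · intro x hx
    by_contra hxV
    have hV : IsClosed (⋃ i ∈ Finset.range m,
        ((toralAuto U)^[i] a +ᵥ (UniTorus.Ann (UniTorus.Gam μ) : Set (Torus d)))) :=
      isClosed_biUnion_finset fun i _ => UniTorus.isClosed_coset _ _
    have h1 := hx _ hV.isOpen_compl hxV
    exact h1.ne' (mem_ae_iff.1 hfull)
  · intro x hx O hO hxO
    simp only [Set.mem_iUnion] at hx
    obtain ⟨i, _, hxi⟩ := hx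
    obtain ⟨h, hh, hhx⟩ := hxi
    refine lt_of_lt_of_le ?_ (Measure.restrict_apply_le
      ((toralAuto U)^[i] a +ᵥ (UniTorus.Ann (UniTorus.Gam μ) : Set (Torus d))) O)
    have hc : Continuous (fun h : UniTorus.Ann (UniTorus.Gam μ) =>
        (toralAuto U)^[i] a + (h : Torus d)) := continuous_const.add continuous_subtype_val
    rw [hres, Measure.smul_apply, Measure.map_apply hc.measurable hO.measurableSet, smul_eq_mul]
    refine ENNReal.mul_pos (hpos i).ne' ?_
    refine ((hO.preimage hc).measure_pos ν ⟨⟨h, hh⟩, ?_⟩).ne'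
    have : (toralAuto U)^[i] a + h = x := hhx
    simpa [this] using hxO
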